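/- The free product (F₂ × ℤ/2ℤ) * F₂ embeds into SL₃(ℤ), where F₂ is the free group of rank 2. -/

import Mathlib

open Matrix

namespace PingPong17

/-- The "far" region: the vector lies in one of two narrow cones and has size at least `m`. -/
def Far (m : ℕ) (x y : ℤ) : Prop :=
  (2 * y.natAbs ≤ x.natAbs ∧ m ≤ x.natAbs) ∨ (2 * x.natAbs ≤ y.natAbs ∧ m ≤ y.natAbs)

/-- The cone attached to a letter of the free group. -/
def Cone (p : Fin 2 × Bool) (m : ℕ) (x y : ℤ) : Prop :=
  (p.1 = 0 → 2 * y.natAbs ≤ x.natAbs ∧ m ≤ x.natAbs) ∧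
  (p.1 = 1 → 2 * x.natAbs ≤ y.natAbs ∧ m ≤ y.natAbs) ∧
  (p.2 = true → (0 ≤ x ∧ 0 ≤ y) ∨ (x ≤ 0 ∧ y ≤ 0)) ∧
  (p.2 = false → (0 ≤ x ∧ y ≤ 0) ∨ (x ≤ 0 ∧ 0 ≤ y))

lemma Cone.far {p : Fin 2 × Bool} {m : ℕ} {x y : ℤ} (h : Cone p m x y) : Far m x y := by
  obtain ⟨i, b⟩ := p
  fin_cases i
  · exact Or.inl (h.1 rfl)
  · exact Or.inr (h.2.1 rfl)

/-- Generators of the rank two free subgroup of `SL₂(ℤ)`. -/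
def gen : Fin 2 → SpecialLinearGroup (Fin 2) ℤ :=
  ![⟨!![1, 22; 0, 1], by simp⟩, ⟨!![1, 0; 22, 1], by simp⟩]

def rho : FreeGroup (Fin 2) →* SpecialLinearGroup (Fin 2) ℤ := FreeGroup.lift gen

/-- The linear action of a letter. -/
def letter (p : Fin 2 × Bool) : SpecialLinearGroup (Fin 2) ℤ := cond p.2 (gen p.1) (gen p.1)⁻¹

lemma letter_eq (p : Fin 2 × Bool) : (letter p : Matrix (Fin 2) (Fin 2) ℤ) =
    if p.1 = 0 then (if p.2 then !![1, 22; 0, 1] else !![1, -22; 0, 1])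
    else (if p.2 then !![1, 0; 22, 1] else !![1, 0; -22, 1]) := by
  obtain ⟨i, b⟩ := p
  fin_cases i <;> cases b
  · change adjugate !![1, 22; 0, 1] = !![1, -22; 0, 1]
    simp [adjugate_fin_two]
  · rfl
  · change adjugate !![1, 0; 22, 1] = !![1, 0; -22, 1]
    simp [adjugate_fin_two]
  · rfl

lemma step_start (p : Fin 2 × Bool) (m : ℕ) (x y : ℤ) (h1 : x.natAbs ≤ 2 * y.natAbs)
    (h2 : y.natAbs ≤ 2 * x.natAbs) (hm : m ≤ 10 * x.natAbs ∨ m ≤ 10 * y.natAbs) :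
    Cone p m ((letter p).1 0 0 * x + (letter p).1 0 1 * y)
      ((letter p).1 1 0 * x + (letter p).1 1 1 * y) := by
  rw [letter_eq]
  obtain ⟨i, b⟩ := p
  fin_cases i <;> cases b <;> simp [Cone] <;> omega

lemma step_next (p q : Fin 2 × Bool) (hpq : p.1 = q.1 → p.2 = q.2) (m : ℕ) (x y : ℤ)
    (h : Cone q m x y) :
    Cone p m ((letter p).1 0 0 * x + (letter p).1 0 1 * y)
      ((letter p).1 1 0 * x + (letter p).1 1 1 * y) := by
  rw [letter_eq]
  obtain ⟨i, b⟩ := p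
  obtain ⟨j, c⟩ := q
  fin_cases i <;> cases b <;> fin_cases j <;> cases c <;> simp [Cone] at h hpq ⊢ <;> omega

lemma mul_act (A B : SpecialLinearGroup (Fin 2) ℤ) (i : Fin 2) (x y : ℤ) :
    (A * B).1 i 0 * x + (A * B).1 i 1 * y =
      A.1 i 0 * (B.1 0 0 * x + B.1 0 1 * y) + A.1 i 1 * (B.1 1 0 * x + B.1 1 1 * y) := by
  rw [show (A * B).1 = A.1 * B.1 from rfl]
  simp only [Matrix.mul_apply, Fin.sum_univ_two]
  ring

lemma word_cone (m : ℕ) (x y : ℤ) (h1 : x.natAbs ≤ 2 * y.natAbs)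
    (h2 : y.natAbs ≤ 2 * x.natAbs) (hm : m ≤ 10 * x.natAbs ∨ m ≤ 10 * y.natAbs) :
    ∀ (L : List (Fin 2 × Bool)) (p : Fin 2 × Bool), FreeGroup.IsReduced (p :: L) →
      Cone p m (((p :: L).map letter).prod.1 0 0 * x + ((p :: L).map letter).prod.1 0 1 * y)
        (((p :: L).map letter).prod.1 1 0 * x + ((p :: L).map letter).prod.1 1 1 * y) := by
  intro L
  induction L with
  | nil =>
    intro p _
    simpa using step_start p m x y h1 h2 hm
  | cons q L ih =>
    intro p hr
    rw [FreeGroup.isReduced_cons_cons] at hr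
    rw [List.map_cons, List.prod_cons, mul_act, mul_act]
    exact step_next p q hr.1 m _ _ (ih q hr.2)

lemma rho_far (h : FreeGroup (Fin 2)) (hh : h ≠ 1) (m : ℕ) (x y : ℤ)
    (h1 : x.natAbs ≤ 2 * y.natAbs)
    (h2 : y.natAbs ≤ 2 * x.natAbs) (hm : m ≤ 10 * x.natAbs ∨ m ≤ 10 * y.natAbs) :
    Far m ((rho h).1 0 0 * x + (rho h).1 0 1 * y) ((rho h).1 1 0 * x + (rho h).1 1 1 * y) := by
  have key : rho h = (h.toWord.map letter).prod := by
    conv_lhs => rw [← FreeGroup.mk_toWord (x := h)]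
    exact FreeGroup.lift_mk
  have hr := FreeGroup.isReduced_toWord (x := h)
  have hne : h.toWord ≠ [] := fun e => hh (FreeGroup.toWord_eq_nil_iff.1 e)
  rw [key]
  revert hr hne
  cases h.toWord with
  | nil => intro _ h; exact absurd rfl h
  | cons p L => intro hr _; exact (word_cone m x y h1 h2 hm L p hr).far

/-- The block matrix. -/
def blkM (A : Matrix (Fin 2) (Fin 2) ℤ) : Matrix (Fin 3) (Fin 3) ℤ :=
  !![A 0 0, A 0 1, 0; A 1 0, A 1 1, 0; 0, 0, 1]

lemma blkM_det (A : Matrix (Fin 2) (Fin 2) ℤ) (h : A.det = 1) : (blkM A).det = 1 := by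
  rw [Matrix.det_fin_two] at h
  simp [blkM, Matrix.det_fin_three]
  linarith

lemma blkM_one : blkM 1 = 1 := by
  ext i j
  fin_cases i <;> fin_cases j <;> simp [blkM]

lemma blkM_mul (A B : Matrix (Fin 2) (Fin 2) ℤ) : blkM (A * B) = blkM A * blkM B := by
  ext i j
  fin_cases i <;> fin_cases j <;> simp [blkM, Matrix.mul_apply, Fin.sum_univ_succ]

/-- The block embedding `SL₂ → SL₃`. -/
def blk : SpecialLinearGroup (Fin 2) ℤ →* SpecialLinearGroup (Fin 3) ℤ where
  toFun A := ⟨blkM A.1, blkM_det A.1 A.2⟩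
  map_one' := Subtype.ext blkM_one
  map_mul' A B := Subtype.ext (blkM_mul A.1 B.1)

def tauM : Matrix (Fin 3) (Fin 3) ℤ := !![-1, 0, 0; 0, -1, 0; 0, 0, 1]

/-- The involution `diag(-1,-1,1)`. -/
def tau : SpecialLinearGroup (Fin 3) ℤ := ⟨tauM, by simp [tauM, Matrix.det_fin_three]⟩

lemma tauM_sq : tauM * tauM = 1 := by
  ext i j
  fin_cases i <;> fin_cases j <;> simp [tauM, Matrix.mul_apply, Fin.sum_univ_succ]

lemma tau_sq : tau * tau = 1 := Subtype.ext tauM_sq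

def sgn : Multiplicative (ZMod 2) →* SpecialLinearGroup (Fin 3) ℤ where
  toFun e := if e = 1 then 1 else tau
  map_one' := by simp
  map_mul' a b := by
    have h : ∀ a b : Multiplicative (ZMod 2), (a = 1 ∧ b = 1 ∧ a * b = 1) ∨
      (a = 1 ∧ b ≠ 1 ∧ a * b ≠ 1) ∨ (a ≠ 1 ∧ b = 1 ∧ a * b ≠ 1) ∨
      (a ≠ 1 ∧ b ≠ 1 ∧ a * b = 1) := by decide
    rcases h a b with ⟨h1, h2, h3⟩ | ⟨h1, h2, h3⟩ | ⟨h1, h2, h3⟩ | ⟨h1, h2, h3⟩ <;>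
      simp [h3, h1, h2, tau_sq]

lemma blkM_tauM (A : Matrix (Fin 2) (Fin 2) ℤ) : blkM A * tauM = tauM * blkM A := by
  ext i j
  fin_cases i <;> fin_cases j <;> simp [blkM, tauM, Matrix.mul_apply, Fin.sum_univ_succ]

lemma blk_tau (A : SpecialLinearGroup (Fin 2) ℤ) : Commute (blk A) tau :=
  Subtype.ext (blkM_tauM A.1)

def homA : FreeGroup (Fin 2) × Multiplicative (ZMod 2) →* SpecialLinearGroup (Fin 3) ℤ :=
  MonoidHom.noncommCoprod (blk.comp rho) sgn (by
    intro m n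
    change Commute (blk (rho m)) (if n = 1 then 1 else tau)
    split_ifs
    · exact Commute.one_right _
    · exact blk_tau _)

def conjM : Matrix (Fin 3) (Fin 3) ℤ :=
  !![-101, -102, -11; -99, -100, 10; -100, -101, 0]

def conjMinv : Matrix (Fin 3) (Fin 3) ℤ :=
  !![1010, 1111, -2120; -1000, -1100, 2099; -1, -1, 2]

def conjG : SpecialLinearGroup (Fin 3) ℤ := ⟨conjM, by simp [conjM, Matrix.det_fin_three]⟩

def conjGinv : SpecialLinearGroup (Fin 3) ℤ :=
  ⟨conjMinv, by simp [conjMinv, Matrix.det_fin_three]⟩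

lemma conjM_mul : conjM * conjMinv = 1 := by
  ext i j
  fin_cases i <;> fin_cases j <;> simp [conjM, conjMinv, Matrix.mul_apply, Fin.sum_univ_succ]

lemma conjG_inv : conjG⁻¹ = conjGinv := by
  rw [inv_eq_iff_mul_eq_one]
  exact Subtype.ext conjM_mul

def homB : FreeGroup (Fin 2) →* SpecialLinearGroup (Fin 3) ℤ :=
  (MulAut.conj conjG).toMonoidHom.comp (blk.comp rho)

/-- Ping-pong set of the first factor. -/
def UA : Set (Fin 3 → ℤ) := {v | (v 2 ≠ 0 ∧ 10 * (v 0 + v 2).natAbs ≤ (v 2).natAbs ∧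
  10 * (v 1 + v 2).natAbs ≤ (v 2).natAbs) ∨ Far (8 * (v 2).natAbs + 1) (v 0) (v 1)}

/-- Ping-pong set of the second factor. -/
def UB : Set (Fin 3 → ℤ) := {v | v 2 ≠ 0 ∧ 10 * (v 0 - v 2).natAbs ≤ (v 2).natAbs ∧
  10 * (v 1 - v 2).natAbs ≤ (v 2).natAbs}

lemma blk_act (A : SpecialLinearGroup (Fin 2) ℤ) (v : Fin 3 → ℤ) :
    (blk A).1 *ᵥ v = ![A.1 0 0 * v 0 + A.1 0 1 * v 1, A.1 1 0 * v 0 + A.1 1 1 * v 1, v 2] := by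
  change blkM A.1 *ᵥ v = _
  ext i
  fin_cases i <;> simp [blkM, Matrix.mulVec, dotProduct, Fin.sum_univ_succ]

lemma tau_act (v : Fin 3 → ℤ) : tau.1 *ᵥ v = ![-v 0, -v 1, v 2] := by
  change tauM *ᵥ v = _
  ext i
  fin_cases i <;> simp [tauM, Matrix.mulVec, dotProduct, Fin.sum_univ_succ]

lemma conjG_act (v : Fin 3 → ℤ) : conjG.1 *ᵥ v = ![-101 * v 0 - 102 * v 1 - 11 * v 2,
    -99 * v 0 - 100 * v 1 + 10 * v 2, -100 * v 0 - 101 * v 1] := by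
  change conjM *ᵥ v = _
  ext i
  fin_cases i <;> simp [conjM, Matrix.mulVec, dotProduct, Fin.sum_univ_succ] <;> ring

lemma conjGinv_act (v : Fin 3 → ℤ) : conjGinv.1 *ᵥ v =
    ![1010 * v 0 + 1111 * v 1 - 2120 * v 2, -1000 * v 0 - 1100 * v 1 + 2099 * v 2,
      - v 0 - v 1 + 2 * v 2] := by
  change conjMinv *ᵥ v = _
  ext i
  fin_cases i <;> simp [conjMinv, Matrix.mulVec, dotProduct, Fin.sum_univ_succ] <;> ring

lemma Far.neg {m : ℕ} {x y : ℤ} (h : Far m x y) : Far m (-x) (-y) := by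
  simpa [Far] using h

lemma ppA (a : FreeGroup (Fin 2) × Multiplicative (ZMod 2)) (ha : a ≠ 1) (v : Fin 3 → ℤ)
    (hv : v ∈ UB) : (homA a).1 *ᵥ v ∈ UA := by
  obtain ⟨h, e⟩ := a
  obtain ⟨h0, h1, h2⟩ := hv
  have e1 : homA (h, e) = blk (rho h) * (if e = 1 then 1 else tau) := rfl
  have e2 : (homA (h, e)).1 *ᵥ v = (blk (rho h)).1 *ᵥ
      ((if e = 1 then (1 : SpecialLinearGroup (Fin 3) ℤ) else tau).1 *ᵥ v) := by
    rw [e1, Matrix.mulVec_mulVec]; rfl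
  rw [e2]
  by_cases hh : h = 1
  · subst hh
    have he : e ≠ 1 := by
      rintro rfl
      exact ha rfl
    rw [if_neg he, tau_act, map_one, map_one]
    left
    simp
    omega
  · right
    split_ifs with he
    · rw [show (1 : SpecialLinearGroup (Fin 3) ℤ).1 = 1 from rfl, one_mulVec, blk_act]
      apply rho_far h hh <;> (try simp) <;> omega
    · rw [tau_act, blk_act]
      apply rho_far h hh <;> simp <;> omega

lemma arithB1 (x y z : ℤ) (h : (z ≠ 0 ∧ 10 * (x + z).natAbs ≤ z.natAbs ∧
    10 * (y + z).natAbs ≤ z.natAbs) ∨ Far (8 * z.natAbs + 1) x y) :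
    ∃ t : ℤ, t = 21 * z - 11 * y - 10 * x ∧ t ≠ 0 ∧ z.natAbs ≤ t.natAbs ∧
      (-x - y + 2 * z).natAbs ≤ t.natAbs := by
  refine ⟨_, rfl, ?_⟩
  rcases h with h | h | h <;> omega

lemma arithB2 (a b c : ℤ) (m : ℕ) (hm : 0 < m) (h : Far (10 * m) a b) (hc : c.natAbs ≤ m) :
    ![-101 * a - 102 * b - 11 * c, -99 * a - 100 * b + 10 * c, -100 * a - 101 * b] ∈ UB := by
  simp [UB]
  rcases h with h | h <;> omega

lemma ppB (h : FreeGroup (Fin 2)) (hh : h ≠ 1) (v : Fin 3 → ℤ)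
    (hv : v ∈ UA) : (homB h).1 *ᵥ v ∈ UB := by
  have e1 : homB h = conjG * blk (rho h) * conjGinv := by
    rw [← conjG_inv]; rfl
  have e2 : (homB h).1 *ᵥ v = conjG.1 *ᵥ ((blk (rho h)).1 *ᵥ (conjGinv.1 *ᵥ v)) := by
    rw [e1, Matrix.mulVec_mulVec, Matrix.mulVec_mulVec]; rfl
  obtain ⟨t, ht, ht0, ht1, ht2⟩ := arithB1 _ _ _ hv
  rw [e2, conjGinv_act, blk_act, conjG_act]
  apply arithB2 _ _ _ t.natAbs (by omega)
  · apply rho_far h hh <;> simp <;> omega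
  · simpa using ht2

/-- The two factors as a family. -/
def Fam : Bool → Type
  | true => FreeGroup (Fin 2) × Multiplicative (ZMod 2)
  | false => FreeGroup (Fin 2)

instance (b : Bool) : Group (Fam b) :=
  match b with
  | true => inferInstanceAs (Group (FreeGroup (Fin 2) × Multiplicative (ZMod 2)))
  | false => inferInstanceAs (Group (FreeGroup (Fin 2)))

def famHom : ∀ b : Bool, Fam b →* SpecialLinearGroup (Fin 3) ℤ
  | true => homA
  | false => homB

def famSet : Bool → Set (Fin 3 → ℤ)
  | true => UA
  | false => UB

lemma disj : Disjoint UA UB := by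
  rw [Set.disjoint_left]
  rintro v h ⟨h0, h1, h2⟩
  rcases h with h | h | h <;> omega

lemma fam_inj : Function.Injective (Monoid.CoprodI.lift famHom) := by
  have key : Function.Injective (Monoid.CoprodI.lift
      (fun b => (SpecialLinearGroup.toLin' (n := Fin 3) (R := ℤ)).comp (famHom b))) := by
    apply Monoid.CoprodI.lift_injective_of_ping_pong _ _ famSet
    · rintro (_ | _)
      · exact ⟨![1, 1, 1], by simp [famSet, UB]⟩
      · exact ⟨![-1, -1, 1], by simp [famSet, UA]⟩
    · rintro (_ | _) (_ | _) hne
      · exact absurd rfl hne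
      · exact disj.symm
      · exact disj
      · exact absurd rfl hne
    · rintro (_ | _) (_ | _) hne h hh
      · exact absurd rfl hne
      · rintro _ ⟨v, hv, rfl⟩
        exact ppB h hh v hv
      · rintro _ ⟨v, hv, rfl⟩
        exact ppA h hh v hv
      · exact absurd rfl hne
    · right
      refine ⟨false, ?_⟩
      change 3 ≤ Cardinal.mk (FreeGroup (Fin 2))
      exact (Cardinal.natCast_lt_aleph0 (n := 3)).le.trans (Cardinal.aleph0_le_mk _)
  have hc : Monoid.CoprodI.lift
      (fun b => (SpecialLinearGroup.toLin' (n := Fin 3) (R := ℤ)).comp (famHom b)) =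
      (SpecialLinearGroup.toLin' (n := Fin 3) (R := ℤ)).comp (Monoid.CoprodI.lift famHom) := by
    ext1 b
    ext x
    simp
  rw [hc, MonoidHom.coe_comp] at key
  exact key.of_comp

def toI : Monoid.Coprod (FreeGroup (Fin 2) × Multiplicative (ZMod 2)) (FreeGroup (Fin 2)) →*
    Monoid.CoprodI Fam :=
  Monoid.Coprod.lift (Monoid.CoprodI.of (M := Fam) (i := true))
    (Monoid.CoprodI.of (M := Fam) (i := false))

def back : ∀ b : Bool, Fam b →*
    Monoid.Coprod (FreeGroup (Fin 2) × Multiplicative (ZMod 2)) (FreeGroup (Fin 2))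
  | true => Monoid.Coprod.inl
  | false => Monoid.Coprod.inr

lemma toI_inj : Function.Injective toI := by
  have : (Monoid.CoprodI.lift back).comp toI = MonoidHom.id _ := by
    apply Monoid.Coprod.hom_ext
    · apply MonoidHom.ext
      intro x
      exact Monoid.CoprodI.lift_of (M := Fam) (i := true) back x
    · apply MonoidHom.ext
      intro x
      exact Monoid.CoprodI.lift_of (M := Fam) (i := false) back x
  exact Function.LeftInverse.injective (g := Monoid.CoprodI.lift back)
    (fun x => DFunLike.congr_fun this x)

end PingPong17

/-- The free product `(F₂ × ℤ/2ℤ) * F₂` embeds into `SL₃(ℤ)`. -/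
theorem stmt_17 :
    ∃ f : Monoid.Coprod (FreeGroup (Fin 2) × Multiplicative (ZMod 2))
        (FreeGroup (Fin 2)) →* Matrix.SpecialLinearGroup (Fin 3) ℤ,
      Function.Injective f :=
  ⟨(Monoid.CoprodI.lift PingPong17.famHom).comp PingPong17.toI,
    PingPong17.fam_inj.comp PingPong17.toI_inj⟩
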